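/- For every n ≥ 1, the number of labeled planar binary trees with n leaves that avoid the three patterns x(*, x(*,*)), x(*, y(*,*)), y(*, y(*,*)) equals the n-th Catalan number (2n)!/(n!·(n+1)!) = binom(2n, n)/(n+1). (This number is the dimension of the n-th component of the operad noncom-Zin.) -/

import Mathlib

/-- Planar binary trees with internal vertices labeled by one of two symbols `x`, `y`. -/
inductive LTree : Type
  | leaf : LTree
  | x : LTree → LTree → LTree
  | y : LTree → LTree → LTree

namespace LTree

/-- Number of leaves. -/
def leaves : LTree → ℕ
  | leaf => 1
  | x u v => u.leaves + v.leaves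
  | y u v => u.leaves + v.leaves

/-- The subtree relation. -/
inductive Subtree : LTree → LTree → Prop
  | refl (t : LTree) : Subtree t t
  | xl {s u v : LTree} : Subtree s u → Subtree s (x u v)
  | xr {s u v : LTree} : Subtree s v → Subtree s (x u v)
  | yl {s u v : LTree} : Subtree s u → Subtree s (y u v)
  | yr {s u v : LTree} : Subtree s v → Subtree s (y u v)

/-- A tree matches (at the root) one of the three forbidden patterns
`x(*, x(*,*))`, `x(*, y(*,*))`, `y(*, y(*,*))`. -/
def IsBadZin : LTree → Prop
  | x _ (x _ _) => True
  | x _ (y _ _) => True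
  | y _ (y _ _) => True
  | _ => False

/-- A tree avoids the three patterns iff no subtree matches one of them. -/
def AvoidsZin (t : LTree) : Prop := ∀ s : LTree, Subtree s t → ¬ IsBadZin s

end LTree

namespace LTree

/-- Encoding of normal trees as nonempty binary trees. -/
def toBin : LTree → BinaryTree Unit
  | leaf => .node () .nil .nil
  | x a _ => .node () a.toBin .nil
  | y a (x b _) => .node () a.toBin b.toBin
  | y a _ => .node () .nil a.toBin

/-- Decoding (the value at the empty tree is irrelevant). -/
def ofBin : BinaryTree Unit → LTree
  | .nil => leaf
  | .node _ .nil .nil => leaf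
  | .node _ (.node i a b) .nil => x (ofBin (.node i a b)) leaf
  | .node _ .nil (.node i a b) => y (ofBin (.node i a b)) leaf
  | .node _ (.node i a b) (.node j c d) =>
      y (ofBin (.node i a b)) (x (ofBin (.node j c d)) leaf)

/-- Recursive description of avoidance. -/
inductive Good : LTree → Prop
  | leaf : Good leaf
  | x {a : LTree} : Good a → Good (x a leaf)
  | y {a : LTree} : Good a → Good (y a leaf)
  | yx {a b : LTree} : Good a → Good b → Good (y a (LTree.x b leaf))

theorem AvoidsZin.good : ∀ t : LTree, AvoidsZin t → Good t
  | leaf, _ => .leaf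
  | x a leaf, h => .x (good a fun s hs => h s (.xl hs))
  | x a (x b c), h => (h _ (.refl _) trivial).elim
  | x a (y b c), h => (h _ (.refl _) trivial).elim
  | y a leaf, h => .y (good a fun s hs => h s (.yl hs))
  | y a (y b c), h => (h _ (.refl _) trivial).elim
  | y a (x b leaf), h =>
      .yx (good a fun s hs => h s (.yl hs)) (good b fun s hs => h s (.yr (.xl hs)))
  | y a (x b (x c d)), h => (h _ (.yr (.refl _)) trivial).elim
  | y a (x b (y c d)), h => (h _ (.yr (.refl _)) trivial).elim

theorem not_bad_of_sub_leaf {s : LTree} (h : Subtree s leaf) : ¬ IsBadZin s := by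
  cases h
  simp [IsBadZin]

theorem avoids_x {a : LTree} (ha : AvoidsZin a) : AvoidsZin (x a leaf) := by
  intro s hs
  cases hs with
  | refl => simp [IsBadZin]
  | xl h => exact ha s h
  | xr h => exact not_bad_of_sub_leaf h

theorem Good.avoids {t : LTree} (h : Good t) : AvoidsZin t := by
  induction h with
  | leaf => exact fun s hs => not_bad_of_sub_leaf hs
  | x _ iha => exact avoids_x iha
  | y _ iha =>
    intro s hs
    cases hs with
    | refl => simp [IsBadZin]
    | yl h => exact iha s h
    | yr h => exact not_bad_of_sub_leaf h
  | yx _ _ iha ihb =>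
    intro s hs
    cases hs with
    | refl => simp [IsBadZin]
    | yl h => exact iha s h
    | yr h => exact avoids_x ihb s h

theorem Good.toBin_spec {t : LTree} (h : Good t) :
    ofBin t.toBin = t ∧ t.toBin.numNodes = t.leaves ∧ t.toBin ≠ .nil := by
  induction h with
  | leaf => simp [toBin, ofBin, leaves, BinaryTree.numNodes]
  | @x a _ iha =>
    obtain ⟨h1, h2, h3⟩ := iha
    cases e : a.toBin <;> simp_all [toBin, ofBin, leaves, BinaryTree.numNodes]
  | @y a _ iha =>
    obtain ⟨h1, h2, h3⟩ := iha
    cases e : a.toBin <;> simp_all [toBin, ofBin, leaves, BinaryTree.numNodes]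
  | @yx a b _ _ iha ihb =>
    obtain ⟨h1, h2, h3⟩ := iha
    obtain ⟨h1b, h2b, h3b⟩ := ihb
    cases e : a.toBin <;> cases eb : b.toBin <;>
      simp_all [toBin, ofBin, leaves, BinaryTree.numNodes] <;> omega

theorem ofBin_spec : ∀ t : BinaryTree Unit, t ≠ .nil → Good (ofBin t) ∧ (ofBin t).toBin = t
  | .nil, h => (h rfl).elim
  | .node _ .nil .nil, _ => ⟨by simpa [ofBin] using Good.leaf, by simp [ofBin, toBin]⟩
  | .node _ (.node i a b) .nil, _ => by
      have := ofBin_spec (.node i a b) (by simp)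
      exact ⟨by rw [ofBin]; exact .x this.1, by rw [ofBin, toBin, this.2]⟩
  | .node _ .nil (.node i a b), _ => by
      have := ofBin_spec (.node i a b) (by simp)
      exact ⟨by rw [ofBin]; exact .y this.1, by rw [ofBin]; simp [toBin, this.2]⟩
  | .node _ (.node i a b) (.node j c d), _ => by
      have h1 := ofBin_spec (.node i a b) (by simp)
      have h2 := ofBin_spec (.node j c d) (by simp)
      exact ⟨by rw [ofBin]; exact .yx h1.1 h2.1, by rw [ofBin, toBin, h1.2, h2.2]⟩

/-- The bijection between normal monomials and binary trees. -/
def binEquiv (n : ℕ) (hn : 1 ≤ n) :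
    {t : LTree // t.leaves = n ∧ AvoidsZin t} ≃ {t // t ∈ BinaryTree.treesOfNumNodesEq n} where
  toFun t := ⟨t.1.toBin, by
    rw [BinaryTree.mem_treesOfNumNodesEq, (AvoidsZin.good _ t.2.2).toBin_spec.2.1, t.2.1]⟩
  invFun t := ⟨ofBin t.1, by
    obtain ⟨t, ht⟩ := t
    rw [BinaryTree.mem_treesOfNumNodesEq] at ht
    have hne : t ≠ .nil := by
      rintro rfl
      simp [BinaryTree.numNodes] at ht
      omega
    obtain ⟨h1, h2⟩ := ofBin_spec t hne
    exact ⟨by rw [← h1.toBin_spec.2.1, h2, ht], h1.avoids⟩⟩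
  left_inv t := Subtype.ext (AvoidsZin.good _ t.2.2).toBin_spec.1
  right_inv t := by
    obtain ⟨t, ht⟩ := t
    have htn := ht
    rw [BinaryTree.mem_treesOfNumNodesEq] at htn
    have hne : t ≠ .nil := by
      rintro rfl
      simp [BinaryTree.numNodes] at htn
      omega
    exact Subtype.ext (ofBin_spec t hne).2

end LTree


open LTree in
/-- For every `n ≥ 1`, the number of labeled planar binary trees with `n` leaves
avoiding the three patterns `x(*, x(*,*))`, `x(*, y(*,*))`, `y(*, y(*,*))`
(i.e. `dim (noncom-Zin)(n)`) equals the `n`-th Catalan number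
`(2n)! / (n! (n+1)!) = C(2n, n) / (n+1)`. -/
theorem noncomZin_dim_eq_catalan :
    ∀ n : ℕ, 1 ≤ n →
      Nat.card {t : LTree // t.leaves = n ∧ AvoidsZin t} = catalan n ∧
      Nat.card {t : LTree // t.leaves = n ∧ AvoidsZin t} = (2 * n).choose n / (n + 1) := by
  intro n hn
  have h : Nat.card {t : LTree // t.leaves = n ∧ AvoidsZin t} = catalan n := by
    rw [Nat.card_congr (binEquiv n hn), Nat.card_eq_fintype_card, Fintype.card_coe,
      BinaryTree.treesOfNumNodesEq_card_eq_catalan]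
  refine ⟨h, ?_⟩
  rw [h, catalan_eq_centralBinom_div, Nat.centralBinom_eq_two_mul_choose]
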